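/- Let (X, μ) be a measure space, let r : X → ℝ be measurable, and let ψ : X → ℂ be measurable. Suppose there are constants c > 0, K₁ ≥ 0, K₂ ≥ 0, real numbers r₁ ≤ r₂, and h₀ > 0 such that for every h ∈ (0, h₀), c · h · ∫_X e^{2 r(x)/h} |ψ(x)|² dμ(x) ≤ K₁ · e^{4 r₂/h} + K₂ · h · e^{4 r₁/h}. Then ψ = 0 μ-almost everywhere on the set {x : r(x) > 2 r₂}. -/

import Mathlib

open MeasureTheory Real

/-!
After multiplication by `h * exp (-4 r₂ / h)`, the bound reads
`∫ c h² exp (2 (r - 2 r₂) / h) ‖ψ‖² ≤ h (K₁ + K₂ h exp (4 (r₁ - r₂) / h))`, whose right-hand side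
tends to `0` with `h`. On `{r > 2 r₂}` the weight `c h² exp (2 (r - 2 r₂) / h)` blows up, so
Fatou's lemma gives `∫ ∞ ‖ψ‖² = 0` over that set.
-/

open Filter Topology
open scoped ENNReal

section Fatou

variable {X ι : Type*} [MeasurableSpace X] {μ : Measure X} {l : Filter ι}

lemma liminf_eq_zero_of_frequently_le {u v : ι → ℝ≥0∞} (huv : ∃ᶠ i in l, u i ≤ v i)
    (hv : Tendsto v l (𝓝 0)) : liminf u l = 0 := by
  refine nonpos_iff_eq_zero.mp <| le_of_forall_gt_imp_ge_of_dense fun ε hε ↦ ?_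
  exact liminf_le_of_frequently_le' <|
    (huv.and_eventually (hv.eventually_le_const hε)).mono fun _ hi ↦ hi.1.trans hi.2

lemma ae_eq_zero_of_liminf_lintegral_mul_eq_zero [l.NeBot] [l.IsCountablyGenerated]
    {w : ι → X → ℝ≥0∞} {f : X → ℝ≥0∞} (hw : ∀ i, AEMeasurable (w i) μ) (hf : AEMeasurable f μ)
    (hw_top : ∀ᵐ x ∂μ, Tendsto (fun i ↦ w i x) l (𝓝 ∞))
    (hlim : liminf (fun i ↦ ∫⁻ x, w i x * f x ∂μ) l = 0) : f =ᵐ[μ] 0 := by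
  have htop_le : ∀ᵐ x ∂μ, ∞ * f x ≤ liminf (fun i ↦ w i x * f x) l := by
    filter_upwards [hw_top] with x hx
    exact (ENNReal.Tendsto.mul_const hx (.inl ENNReal.top_ne_zero)).liminf_eq.ge
  have hint : ∫⁻ x, ∞ * f x ∂μ = 0 := nonpos_iff_eq_zero.mp <|
    calc ∫⁻ x, ∞ * f x ∂μ ≤ ∫⁻ x, liminf (fun i ↦ w i x * f x) l ∂μ := lintegral_mono_ae htop_le
      _ ≤ liminf (fun i ↦ ∫⁻ x, w i x * f x ∂μ) l := lintegral_liminf_le' fun i ↦ (hw i).mul hf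
      _ = 0 := hlim
  filter_upwards [(lintegral_eq_zero_iff' (hf.const_mul ∞)).mp hint] with x hx
  simpa using hx

end Fatou

section ExponentialWeight

variable {X : Type*} [MeasurableSpace X] {μ : Measure X}

lemma tendsto_pow_mul_exp_div_nhdsGT_zero (n : ℕ) {a : ℝ} (ha : 0 < a) :
    Tendsto (fun h : ℝ ↦ h ^ n * exp (a / h)) (𝓝[>] 0) atTop := by
  have hexp := (tendsto_exp_mul_div_rpow_atTop n a ha).comp tendsto_inv_nhdsGT_zero
  refine hexp.congr fun h ↦ ?_
  simp [div_eq_mul_inv, mul_comm]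

lemma ae_eq_zero_of_frequently_pow_mul_lintegral_exp_div_le {a : X → ℝ} {f : X → ℝ≥0∞}
    (ha : AEMeasurable a μ) (hf : AEMeasurable f μ) (n : ℕ) {K : ℝ≥0∞} (hK : K ≠ ∞)
    (hbound : ∃ᶠ h in 𝓝[>] (0 : ℝ),
      ENNReal.ofReal (h ^ n) * ∫⁻ x, ENNReal.ofReal (exp (a x / h)) * f x ∂μ ≤ K) :
    ∀ᵐ x ∂μ, 0 < a x → f x = 0 := by
  have hS : NullMeasurableSet {x | 0 < a x} μ := nullMeasurableSet_lt aemeasurable_const ha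
  refine (ae_restrict_iff'₀ hS).mp ?_
  refine ae_eq_zero_of_liminf_lintegral_mul_eq_zero (l := 𝓝[>] (0 : ℝ))
    (w := fun h x ↦ ENNReal.ofReal (h ^ (n + 1) * exp (a x / h)))
    (fun h ↦ AEMeasurable.restrict (by fun_prop)) hf.restrict ?_ ?_
  · refine (ae_restrict_iff'₀ hS).mpr <| ae_of_all _ fun x hx ↦ ?_
    exact ENNReal.tendsto_ofReal_atTop.comp (tendsto_pow_mul_exp_div_nhdsGT_zero (n + 1) hx)
  · have hvanish : Tendsto (fun h : ℝ ↦ ENNReal.ofReal h * K) (𝓝[>] 0) (𝓝 0) := by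
      have hofReal : Tendsto ENNReal.ofReal (𝓝[>] 0) (𝓝 0) :=
        (ENNReal.continuous_ofReal.tendsto' 0 0 ENNReal.ofReal_zero).mono_left nhdsWithin_le_nhds
      simpa using ENNReal.Tendsto.mul_const hofReal (.inr hK)
    refine liminf_eq_zero_of_frequently_le
      ((hbound.and_eventually self_mem_nhdsWithin).mono ?_) hvanish
    rintro h ⟨hle, hpos : 0 < h⟩
    calc ∫⁻ x in {x | 0 < a x}, ENNReal.ofReal (h ^ (n + 1) * exp (a x / h)) * f x ∂μ
        ≤ ∫⁻ x, ENNReal.ofReal (h ^ (n + 1) * exp (a x / h)) * f x ∂μ :=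
          setLIntegral_le_lintegral _ _
      _ = ENNReal.ofReal (h ^ (n + 1)) * ∫⁻ x, ENNReal.ofReal (exp (a x / h)) * f x ∂μ := by
          rw [← lintegral_const_mul' _ _ ENNReal.ofReal_ne_top]
          simp only [ENNReal.ofReal_mul (pow_nonneg hpos.le _), mul_assoc]
      _ = ENNReal.ofReal h *
            (ENNReal.ofReal (h ^ n) * ∫⁻ x, ENNReal.ofReal (exp (a x / h)) * f x ∂μ) := by
          rw [pow_succ', ENNReal.ofReal_mul hpos.le, mul_assoc]
      _ ≤ ENNReal.ofReal h * K := by gcongr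

lemma lintegral_exp_sub_div_mul (a : X → ℝ) (b h : ℝ) (f : X → ℝ≥0∞) :
    ∫⁻ x, ENNReal.ofReal (exp ((a x - b) / h)) * f x ∂μ =
      ENNReal.ofReal (exp (-(b / h))) * ∫⁻ x, ENNReal.ofReal (exp (a x / h)) * f x ∂μ := by
  rw [← lintegral_const_mul' _ _ ENNReal.ofReal_ne_top]
  refine lintegral_congr fun x ↦ ?_
  rw [← mul_assoc, ← ENNReal.ofReal_mul (exp_nonneg _), ← exp_add]
  ring_nf

lemma exp_neg_div_mul_add_le {K₁ K₂ b₁ b₂ h : ℝ} (hK₂ : 0 ≤ K₂) (hb : b₁ ≤ b₂) (hpos : 0 < h)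
    (hle : h ≤ 1) :
    exp (-(b₂ / h)) * (K₁ * exp (b₂ / h) + K₂ * h * exp (b₁ / h)) ≤ K₁ + K₂ :=
  calc exp (-(b₂ / h)) * (K₁ * exp (b₂ / h) + K₂ * h * exp (b₁ / h))
      ≤ exp (-(b₂ / h)) * (K₁ * exp (b₂ / h) + K₂ * 1 * exp (b₂ / h)) := by gcongr
    _ = K₁ + K₂ := by rw [exp_neg]; field_simp

lemma ofReal_mul_lintegral_exp_sub_div_le {a : X → ℝ} {f : X → ℝ≥0∞} {c K₁ K₂ b₁ b₂ h : ℝ}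
    (hc : 0 < c) (hK₁ : 0 ≤ K₁) (hK₂ : 0 ≤ K₂) (hb : b₁ ≤ b₂) (hpos : 0 < h) (hle : h ≤ 1)
    (hbound : ENNReal.ofReal (c * h) * ∫⁻ x, ENNReal.ofReal (exp (a x / h)) * f x ∂μ ≤
      ENNReal.ofReal (K₁ * exp (b₂ / h)) + ENNReal.ofReal (K₂ * h * exp (b₁ / h))) :
    ENNReal.ofReal h * ∫⁻ x, ENNReal.ofReal (exp ((a x - b₂) / h)) * f x ∂μ ≤
      ENNReal.ofReal (K₁ + K₂) / ENNReal.ofReal c := by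
  have hc' : ENNReal.ofReal c ≠ 0 := (ENNReal.ofReal_pos.mpr hc).ne'
  rw [ENNReal.le_div_iff_mul_le (.inl hc') (.inl ENNReal.ofReal_ne_top)]
  set I := ∫⁻ x, ENNReal.ofReal (exp (a x / h)) * f x ∂μ
  calc ENNReal.ofReal h * (∫⁻ x, ENNReal.ofReal (exp ((a x - b₂) / h)) * f x ∂μ) *
        ENNReal.ofReal c
      = ENNReal.ofReal (exp (-(b₂ / h))) * (ENNReal.ofReal (c * h) * I) := by
        rw [lintegral_exp_sub_div_mul, ENNReal.ofReal_mul hc.le]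
        ring
    _ ≤ ENNReal.ofReal (exp (-(b₂ / h))) *
          (ENNReal.ofReal (K₁ * exp (b₂ / h)) + ENNReal.ofReal (K₂ * h * exp (b₁ / h))) := by
        gcongr
    _ = ENNReal.ofReal
          (exp (-(b₂ / h)) * (K₁ * exp (b₂ / h) + K₂ * h * exp (b₁ / h))) := by
        rw [← ENNReal.ofReal_add (by positivity) (by positivity),
          ← ENNReal.ofReal_mul (exp_nonneg _)]
    _ ≤ ENNReal.ofReal (K₁ + K₂) :=
        ENNReal.ofReal_le_ofReal (exp_neg_div_mul_add_le hK₂ hb hpos hle)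

end ExponentialWeight

theorem vanishing_from_weighted_bound_inhomogeneous_general
    {X E : Type*} [MeasurableSpace X] [NormedAddCommGroup E] {μ : Measure X}
    {r : X → ℝ} (hr : AEMeasurable r μ) {ψ : X → E} (hψ : AEMeasurable (fun x ↦ ‖ψ x‖) μ)
    {c K₁ K₂ r₁ r₂ : ℝ} (hc : 0 < c) (hK₁ : 0 ≤ K₁) (hK₂ : 0 ≤ K₂) (hr₁₂ : r₁ ≤ r₂)
    (hbound : ∃ᶠ h in 𝓝[>] (0 : ℝ),
      ENNReal.ofReal (c * h) *
          ∫⁻ x, ENNReal.ofReal (exp (2 * r x / h)) * ENNReal.ofReal (‖ψ x‖ ^ 2) ∂μ ≤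
        ENNReal.ofReal (K₁ * exp (4 * r₂ / h)) +
          ENNReal.ofReal (K₂ * h * exp (4 * r₁ / h))) :
    ∀ᵐ x ∂μ, 2 * r₂ < r x → ψ x = 0 := by
  have hK : ENNReal.ofReal (K₁ + K₂) / ENNReal.ofReal c ≠ ∞ :=
    ENNReal.div_ne_top ENNReal.ofReal_ne_top (ENNReal.ofReal_pos.mpr hc).ne'
  have hnormalized : ∃ᶠ h in 𝓝[>] (0 : ℝ), ENNReal.ofReal (h ^ 1) *
      ∫⁻ x, ENNReal.ofReal (exp ((2 * r x - 4 * r₂) / h)) * ENNReal.ofReal (‖ψ x‖ ^ 2) ∂μ ≤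
        ENNReal.ofReal (K₁ + K₂) / ENNReal.ofReal c := by
    refine (hbound.and_eventually (Ioc_mem_nhdsGT one_pos)).mono fun h ⟨hle, hh⟩ ↦ ?_
    rw [pow_one]
    exact ofReal_mul_lintegral_exp_sub_div_le hc hK₁ hK₂ (by linarith) hh.1 hh.2 hle
  filter_upwards [ae_eq_zero_of_frequently_pow_mul_lintegral_exp_div_le
    ((hr.const_mul 2).sub_const (4 * r₂)) (hψ.pow_const 2).ennreal_ofReal 1 hK hnormalized]
    with x hx hrx
  have hsq : ‖ψ x‖ ^ 2 ≤ 0 := ENNReal.ofReal_eq_zero.mp (hx (by linarith))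
  exact norm_eq_zero.mp (sq_nonpos_iff _ |>.mp hsq)

/-- Measure-theoretic vanishing step for the inhomogeneous problem: if
`c h ∫ e^{2r/h} |ψ|² dμ ≤ K₁ e^{4r₂/h} + K₂ h e^{4r₁/h}` for all `h ∈ (0, h₀)`, with
`r₁ ≤ r₂`, then `ψ = 0` a.e. on `{r > 2r₂}`. -/
theorem vanishing_from_weighted_bound_inhomogeneous
    {X : Type*} [MeasurableSpace X] (μ : Measure X)
    (r : X → ℝ) (hr : Measurable r) (ψ : X → ℂ) (hψ : Measurable ψ)
    (c K₁ K₂ r₁ r₂ h₀ : ℝ) (hc : 0 < c) (hK₁ : 0 ≤ K₁) (hK₂ : 0 ≤ K₂)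
    (hr₁₂ : r₁ ≤ r₂) (hh₀ : 0 < h₀)
    (hbound : ∀ h ∈ Set.Ioo (0 : ℝ) h₀,
      ENNReal.ofReal (c * h) *
          ∫⁻ x, ENNReal.ofReal (Real.exp (2 * r x / h)) * ENNReal.ofReal (‖ψ x‖ ^ 2) ∂μ ≤
        ENNReal.ofReal (K₁ * Real.exp (4 * r₂ / h)) +
          ENNReal.ofReal (K₂ * h * Real.exp (4 * r₁ / h))) :
    ∀ᵐ x ∂μ, 2 * r₂ < r x → ψ x = 0 := by
  exact vanishing_from_weighted_bound_inhomogeneous_general hr.aemeasurable hψ.norm.aemeasurable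
    hc hK₁ hK₂ hr₁₂ (eventually_of_mem (Ioo_mem_nhdsGT hh₀) hbound).frequently
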